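/- Let F be an hke collection with α(F) = α, let A ∈ F, and let D be an arbitrary finite set. Then F ∪ {D} is an hke collection if and only if |D| = α and for every partition {Γ₁, Γ₂} of F − {A} with Γ₂ nonempty, |A ∩ D ∩ ⋂Γ₁ − ⋃Γ₂| = |⋂Γ₂ − ⋃Γ₁ − A − D| (where, if Γ₁ = ∅, the term ⋂Γ₁ is ignored, i.e., the left side is |A ∩ D − ⋃Γ₂| and the right side is |⋂Γ₂ − A − D|). -/

import Mathlib

open Finset

/-- The union of a finite collection of finite sets. -/
def famUnion (Γ : Finset (Finset ℕ)) : Finset ℕ := Γ.sup id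

/-- The intersection of a finite collection of finite sets
(equal to the usual intersection when the collection is nonempty). -/
def famInter (Γ : Finset (Finset ℕ)) : Finset ℕ :=
  (Γ.sup id).filter (fun x => ∀ A ∈ Γ, x ∈ A)

/-- `F` is a hereditary König–Egerváry (hke) collection with `α(F) = α`:
`α` is a positive integer and `|⋃Γ| + |⋂Γ| = 2α` for every nonempty subcollection `Γ` of `F`. -/
def IsHKE (F : Finset (Finset ℕ)) (α : ℕ) : Prop :=
  0 < α ∧ ∀ Γ ⊆ F, Γ.Nonempty → (famUnion Γ).card + (famInter Γ).card = 2 * α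

/-- Number of points of `U` in all members of `P` and in no member of `Q`. -/
def atomN (U : Finset ℕ) (P Q : Finset (Finset ℕ)) : ℕ :=
  (U.filter (fun x => (∀ S ∈ P, x ∈ S) ∧ ∀ S ∈ Q, x ∉ S)).card

/-- The antisymmetrised count. -/
def dl (U : Finset ℕ) (P Q : Finset (Finset ℕ)) : ℤ := (atomN U P Q : ℤ) - atomN U Q P

lemma atomN_split (U : Finset ℕ) (P Q : Finset (Finset ℕ)) (X : Finset ℕ) :
    atomN U P Q = atomN U (insert X P) Q + atomN U P (insert X Q) := by
  unfold atomN
  rw [← Finset.card_filter_add_card_filter_not (fun x => x ∈ X), Finset.filter_filter,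
    Finset.filter_filter]
  congr 2
  · ext x; simp only [mem_filter, mem_insert, forall_eq_or_imp]; tauto
  · ext x; simp only [mem_filter, mem_insert, forall_eq_or_imp]; tauto

lemma dl_split (U : Finset ℕ) (P Q : Finset (Finset ℕ)) (X : Finset ℕ) :
    dl U P Q = dl U (insert X P) Q + dl U P (insert X Q) := by
  unfold dl
  have h1 := atomN_split U P Q X
  have h2 := atomN_split U Q P X
  omega

lemma dl_symm (U : Finset ℕ) (P Q : Finset (Finset ℕ)) : dl U P Q = - dl U Q P := by
  unfold dl; omega

lemma mem_famUnion (Γ : Finset (Finset ℕ)) (x : ℕ) : x ∈ famUnion Γ ↔ ∃ S ∈ Γ, x ∈ S := by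
  simp [famUnion, Finset.mem_sup]

lemma mem_famInter (Γ : Finset (Finset ℕ)) (h : Γ.Nonempty) (x : ℕ) :
    x ∈ famInter Γ ↔ ∀ S ∈ Γ, x ∈ S := by
  unfold famInter
  rw [mem_filter]
  constructor
  · exact fun h => h.2
  · intro hx
    obtain ⟨S, hS⟩ := h
    exact ⟨(mem_famUnion Γ x).2 ⟨S, hS, hx S hS⟩, hx⟩

lemma card_dl (U : Finset ℕ) (Γ : Finset (Finset ℕ)) (h : Γ.Nonempty) (hU : famUnion Γ ⊆ U) :
    ((famUnion Γ).card : ℤ) + (famInter Γ).card = U.card + dl U Γ ∅ := by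
  have h1 : famInter Γ = U.filter (fun x => (∀ S ∈ Γ, x ∈ S) ∧ ∀ S ∈ (∅ : Finset (Finset ℕ)), x ∉ S) := by
    ext x
    rw [mem_famInter Γ h]
    simp only [mem_filter, notMem_empty, false_imp_iff, implies_true, and_true]
    constructor
    · intro hx
      refine ⟨?_, hx⟩
      obtain ⟨S, hS⟩ := h
      exact hU ((mem_famUnion Γ x).2 ⟨S, hS, hx S hS⟩)
    · exact fun h => h.2
  have h2 : U \ famUnion Γ = U.filter (fun x => (∀ S ∈ (∅ : Finset (Finset ℕ)), x ∈ S) ∧ ∀ S ∈ Γ, x ∉ S) := by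
    ext x
    simp [mem_famUnion]
  have h3 := Finset.card_sdiff_add_card_eq_card hU
  unfold dl atomN
  rw [← h1, ← h2]
  omega

lemma famUnion_mono {Γ G : Finset (Finset ℕ)} (h : Γ ⊆ G) : famUnion Γ ⊆ famUnion G := by
  intro x
  rw [mem_famUnion, mem_famUnion]
  rintro ⟨S, hS, hx⟩
  exact ⟨S, h hS, hx⟩

lemma isHKE_dl (U : Finset ℕ) (G : Finset (Finset ℕ)) (α : ℕ) (hU : famUnion G ⊆ U) :
    IsHKE G α ↔ 0 < α ∧ ∀ Γ ⊆ G, Γ.Nonempty → dl U Γ ∅ = 2 * α - U.card := by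
  unfold IsHKE
  refine and_congr_right fun _ => forall_congr' fun Γ => forall_congr' fun hΓ =>
    forall_congr' fun hn => ?_
  have := card_dl U Γ hn ((famUnion_mono hΓ).trans hU)
  omega

lemma dl_zero (U : Finset ℕ) (G : Finset (Finset ℕ)) (c : ℤ)
    (h : ∀ Γ ⊆ G, Γ.Nonempty → dl U Γ ∅ = c) (Q : Finset (Finset ℕ)) :
    ∀ P, P ⊆ G → Q ⊆ G → P.Nonempty → Q.Nonempty → dl U P Q = 0 := by
  induction Q using Finset.induction_on with
  | empty => intro P _ _ _ h; simp at h
  | insert S Q hS ih =>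
    intro P hP hQ hPn _
    have h1 := dl_split U P Q S
    have hSG : S ∈ G := hQ (mem_insert_self _ _)
    have hQG : Q ⊆ G := (subset_insert _ _).trans hQ
    have hPS : insert S P ⊆ G := insert_subset hSG hP
    rcases Q.eq_empty_or_nonempty with rfl | hQn
    · rw [h P hP hPn, h _ hPS (insert_nonempty _ _)] at h1
      linarith
    · rw [ih P hP hQG hPn hQn, ih _ hPS hQG (insert_nonempty _ _) hQn] at h1
      linarith

lemma card_left (U A D : Finset ℕ) (hA : A ⊆ U) (Γ₁ Γ₂ : Finset (Finset ℕ)) :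
    (if Γ₁ = ∅ then ((A ∩ D) \ famUnion Γ₂).card
            else ((A ∩ D ∩ famInter Γ₁) \ famUnion Γ₂).card)
      = atomN U (insert A (insert D Γ₁)) Γ₂ := by
  unfold atomN
  split_ifs with h
  · subst h
    congr 1
    ext x
    have := @hA x
    simp [mem_famUnion]
    tauto
  · congr 1
    ext x
    have := @hA x
    rw [mem_sdiff, mem_inter, mem_famInter _ (nonempty_iff_ne_empty.2 h), mem_famUnion]
    simp
    tauto

lemma card_right (U A D : Finset ℕ) (Γ₁ Γ₂ : Finset (Finset ℕ)) (h : Γ₂.Nonempty)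
    (hU : famUnion Γ₂ ⊆ U) :
    (((famInter Γ₂ \ famUnion Γ₁) \ A) \ D).card = atomN U Γ₂ (insert A (insert D Γ₁)) := by
  unfold atomN
  congr 1
  ext x
  have : (∀ S ∈ Γ₂, x ∈ S) → x ∈ U := by
    intro hx
    obtain ⟨S, hS⟩ := h
    exact hU ((mem_famUnion Γ₂ x).2 ⟨S, hS, hx S hS⟩)
  simp only [mem_sdiff, mem_famInter _ h, mem_famUnion]
  simp
  tauto

lemma dl_refine (U A D : Finset ℕ) (E : Finset (Finset ℕ))
    (h : ∀ P Q, Disjoint P Q → P ∪ Q = E → Q.Nonempty → dl U (insert A (insert D P)) Q = 0)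
    (R : Finset (Finset ℕ)) :
    ∀ P Q, Disjoint P Q → P ∪ Q ∪ R = E → Q.Nonempty →
      dl U (insert A (insert D P)) Q = 0 := by
  induction R using Finset.induction_on with
  | empty => intro P Q hd hu hn; exact h P Q hd (by simpa using hu) hn
  | insert X R hX ih =>
    intro P Q hd hu hn
    by_cases hXm : X ∈ P ∪ Q
    · refine ih P Q hd ?_ hn
      rw [← hu, union_insert, ← insert_union, insert_eq_of_mem hXm]
    · rw [mem_union, not_or] at hXm
      have h1 := dl_split U (insert A (insert D P)) Q X
      have e : insert X (insert A (insert D P)) = insert A (insert D (insert X P)) := by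
        ext; simp only [mem_insert]; tauto
      rw [e, ih (insert X P) Q, ih P (insert X Q)] at h1
      · simpa using h1
      · rw [disjoint_insert_right]; exact ⟨hXm.1, hd⟩
      · rw [← hu]; ext; simp only [mem_insert, mem_union]; tauto
      · exact insert_nonempty _ _
      · rw [disjoint_insert_left]; exact ⟨hXm.2, hd⟩
      · rw [← hu]; ext; simp only [mem_insert, mem_union]; tauto
      · exact hn

lemma dl_single (U S : Finset ℕ) (h : S ⊆ U) : dl U {S} ∅ = 2 * S.card - U.card := by
  have h1 : famUnion {S} = S := by ext; simp [mem_famUnion]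
  have h2 : famInter {S} = S := by ext; simp [mem_famInter]
  have := card_dl U {S} (singleton_nonempty _) (by rw [h1]; exact h)
  rw [h1, h2] at this
  omega

/-- for an hke collection `F` with `α(F) = α`, `A ∈ F` and an arbitrary
finite set `D`, the collection `F ∪ {D}` is an hke collection iff `|D| = α` and for
every partition `{Γ₁, Γ₂}` of `F − {A}` with `Γ₂` nonempty,
`|A ∩ D ∩ ⋂Γ₁ − ⋃Γ₂| = |⋂Γ₂ − ⋃Γ₁ − A − D|`
(where, if `Γ₁ = ∅`, the left side is `|A ∩ D − ⋃Γ₂|`). -/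
theorem insert_isHKE_iff (F : Finset (Finset ℕ)) (α : ℕ) (hF : IsHKE F α)
    (A : Finset ℕ) (hA : A ∈ F) (D : Finset ℕ) :
    (∃ β, IsHKE (insert D F) β) ↔
      (D.card = α ∧
        ∀ Γ₁ Γ₂ : Finset (Finset ℕ), Disjoint Γ₁ Γ₂ → Γ₁ ∪ Γ₂ = F.erase A →
          Γ₂.Nonempty →
          (if Γ₁ = ∅ then ((A ∩ D) \ famUnion Γ₂).card
            else ((A ∩ D ∩ famInter Γ₁) \ famUnion Γ₂).card)
          = (((famInter Γ₂ \ famUnion Γ₁) \ A) \ D).card) := by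
  set U := famUnion (insert D F) with hUdef
  have hUF : famUnion F ⊆ U := famUnion_mono (subset_insert _ _)
  have hmem : ∀ S ∈ insert D F, S ⊆ U := fun S hS x hx => (mem_famUnion _ _).2 ⟨S, hS, hx⟩
  have hAU : A ⊆ U := hmem A (mem_insert_of_mem hA)
  have hDU : D ⊆ U := hmem D (mem_insert_self _ _)
  have hEF : F.erase A ⊆ F := erase_subset _ _
  obtain ⟨hα, hF'⟩ := (isHKE_dl U F α hUF).1 hF
  have hAc : A.card = α := by
    have h1 := dl_single U A hAU
    rw [hF' {A} (by simpa using hA) (singleton_nonempty _)] at h1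
    omega
  have hF0 := dl_zero U F _ hF'
  have hcond : (∀ Γ₁ Γ₂ : Finset (Finset ℕ), Disjoint Γ₁ Γ₂ → Γ₁ ∪ Γ₂ = F.erase A →
          Γ₂.Nonempty →
          (if Γ₁ = ∅ then ((A ∩ D) \ famUnion Γ₂).card
            else ((A ∩ D ∩ famInter Γ₁) \ famUnion Γ₂).card)
          = (((famInter Γ₂ \ famUnion Γ₁) \ A) \ D).card) ↔
      ∀ P Q, Disjoint P Q → P ∪ Q = F.erase A → Q.Nonempty →
        dl U (insert A (insert D P)) Q = 0 := by
    refine forall_congr' fun P => forall_congr' fun Q => forall_congr' fun hd =>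
      forall_congr' fun hu => forall_congr' fun hn => ?_
    have hQF : Q ⊆ F := (subset_union_right.trans hu.subset).trans hEF
    rw [card_left U A D hAU, card_right U A D P Q hn ((famUnion_mono hQF).trans hUF)]
    unfold dl
    omega
  rw [hcond]
  constructor
  · rintro ⟨β, hβ⟩
    obtain ⟨_, hG⟩ := (isHKE_dl U (insert D F) β subset_rfl).1 hβ
    have h1 := dl_single U A hAU
    rw [hG {A} (by simpa using Or.inr hA) (singleton_nonempty _)] at h1
    have h2 := dl_single U D hDU
    rw [hG {D} (by simp) (singleton_nonempty _)] at h2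
    refine ⟨by omega, fun P Q hd hu hn => ?_⟩
    have hQF : Q ⊆ F := (subset_union_right.trans hu.subset).trans hEF
    have hPF : P ⊆ F := (subset_union_left.trans hu.subset).trans hEF
    refine dl_zero U _ _ hG Q _ ?_ (hQF.trans (subset_insert _ _)) (insert_nonempty _ _) hn
    exact insert_subset (mem_insert_of_mem hA) (insert_subset_insert _ hPF)
  · rintro ⟨hD, hc⟩
    refine ⟨α, (isHKE_dl U (insert D F) α subset_rfl).2 ⟨hα, ?_⟩⟩
    have hDs : dl U {D} ∅ = 2 * α - U.card := by rw [dl_single U D hDU, hD]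
    -- the key vanishing
    have hc' : ∀ P Q, Disjoint P Q → P ⊆ F.erase A → Q ⊆ F.erase A → Q.Nonempty →
        dl U (insert A (insert D P)) Q = 0 := fun P Q hd hP hQ hn =>
      dl_refine U A D _ hc (F.erase A) P Q hd
        (union_eq_right.2 (union_subset hP hQ)) hn
    have hAD : dl U {A} {D} = 0 := by
      have h1 := dl_split U {A} ∅ D
      have h2 := dl_split U {D} ∅ A
      have h3 := dl_single U A hAU
      have h4 := dl_symm U {A} {D}
      have e : insert D ({A} : Finset (Finset ℕ)) = insert A {D} := pair_comm _ _
      simp only [insert_empty_eq] at h1 h2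
      rw [e] at h1
      rw [hAc] at h3
      linarith
    have hAP : ∀ P, P ⊆ F.erase A → dl U (insert A P) {D} = 0 := by
      intro P
      induction P using Finset.induction_on with
      | empty => intro _; simpa using hAD
      | insert X P hX ih =>
        intro hP
        have hPE : P ⊆ F.erase A := (subset_insert _ _).trans hP
        have hXE : X ∈ F.erase A := hP (mem_insert_self _ _)
        have h1 := dl_split U (insert A P) {D} X
        have h2 := dl_split U (insert A P) {X} D
        rw [hF0 {X} (insert A P) (insert_subset hA (hPE.trans hEF))
          (by simpa using hEF hXE) (insert_nonempty _ _) (singleton_nonempty _),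
          insert_comm D A P, hc' P {X} (by simpa using hX) hPE (by simpa using hXE)
          (singleton_nonempty _), pair_comm D X] at h2
        rw [ih hPE, insert_comm X A P] at h1
        linarith
    have hPD : ∀ P, P ⊆ F → P.Nonempty → dl U P {D} = 0 := by
      intro P hP hn
      by_cases hAm : A ∈ P
      · have := hAP (P.erase A) (erase_subset_erase _ hP)
        rwa [insert_erase hAm] at this
      · have hPE : P ⊆ F.erase A := fun X hX =>
          mem_erase.2 ⟨fun e => hAm (e ▸ hX), hP hX⟩
        have h1 := dl_split U P {D} A
        have h2 := hc' ∅ P (disjoint_empty_left _) (empty_subset _) hPE hn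
        rw [insert_empty_eq] at h2
        rw [hAP P hPE, dl_symm U P (insert A {D}), h2] at h1
        simpa using h1
    intro Γ hΓ hn
    by_cases hDm : D ∈ Γ
    · have hE : Γ.erase D ⊆ F := by
        intro X hX
        rw [mem_erase] at hX
        exact (mem_insert.1 (hΓ hX.2)).resolve_left hX.1
      rcases (Γ.erase D).eq_empty_or_nonempty with h0 | h0
      · have e : Γ = {D} := by rw [← insert_erase hDm, h0, insert_empty_eq]
        rw [e, hDs]
      · have h1 := dl_split U (Γ.erase D) ∅ D
        rw [insert_erase hDm, insert_empty_eq, hPD _ hE h0, hF' _ hE h0] at h1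
        linarith
    · refine hF' Γ (fun X hX => (mem_insert.1 (hΓ hX)).resolve_left ?_) hn
      exact fun e => hDm (e ▸ hX)
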